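/- Under the two-regime setup with C = |μ_a − μ_b| > 0, for any sequence of reals (τ_n) with 0 < τ_n ≤ √2·M for all n, one has (1/(√n · τ_n)) · max_{1≤k≤n} D_n(k) → ∞ as n → ∞. -/

import Mathlib

/-!
The maximum dominates the value at the change point `K n = ⌊nλ⌋`. There
`D n (K n) / n → |λ μa - λ (λ μa + (μb - λ μb))| = λ (1 - λ) |μa - μb| > 0`,
because each partial sum divided by `n` is a Cesàro mean times `K n / n → λ`.
Since `τ n` is bounded by `√2 M`, the statistic is at least
`√n * (D n (K n) / n) / (√2 M)` for large `n`, which diverges.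
-/

open Filter

/-- At an index `K ≤ n` the pooled sum splits into the first `K` terms of `a` and the terms of `b`
with indices `K + 1, …, n`. -/
lemma sum_two_regime (a b : ℕ → ℝ) (K n : ℕ) (h : K ≤ n) :
    ∑ t ∈ Finset.Icc 1 n, (if t ≤ K then a t else b t) =
      ∑ t ∈ Finset.Icc 1 K, a t +
        (∑ t ∈ Finset.Icc 1 n, b t - ∑ t ∈ Finset.Icc 1 K, b t) := by
  induction n, h using Nat.le_induction with
  | base =>
    rw [sub_self, add_zero]
    exact Finset.sum_congr rfl fun t ht => if_pos (Finset.mem_Icc.1 ht).2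
  | succ n hn ih =>
    rw [Finset.sum_Icc_succ_top (by omega), Finset.sum_Icc_succ_top (by omega), ih,
      if_neg (by omega)]
    ring

/-- Partial sums up to `K n`, normalised by `n`, converge when `K n → ∞` and `K n / n → l`. -/
lemma tendsto_partial_sum_div (a : ℕ → ℝ) (μ l : ℝ) (K : ℕ → ℕ)
    (hma : Tendsto (fun m : ℕ => (1 / (m : ℝ)) * ∑ t ∈ Finset.Icc 1 m, a t) atTop (nhds μ))
    (hK : Tendsto K atTop atTop)
    (hKn : Tendsto (fun n : ℕ => (K n : ℝ) / n) atTop (nhds l)) :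
    Tendsto (fun n : ℕ => (∑ t ∈ Finset.Icc 1 (K n), a t) / (n : ℝ)) atTop (nhds (l * μ)) := by
  refine (hKn.mul (hma.comp hK)).congr' ?_
  filter_upwards [hK.eventually_gt_atTop 0] with n hn
  have : (K n : ℝ) ≠ 0 := by exact_mod_cast hn.ne'
  simp only [Function.comp]
  field_simp

/-- Two-regime setup: observations follow `(a_t)` up to the change point `k*_n = ⌊nλ⌋`
and `(b_t)` afterwards, with both sequences `[0,M]`-valued and having Cesàro means
converging to `μ_a` and `μ_b` respectively, and `C = |μ_a − μ_b| > 0`. For any sequence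
of reals `(τ_n)` with `0 < τ_n ≤ √2·M` for all `n`, one has
`(1/(√n · τ_n)) · max_{1≤k≤n} D_n(k) → ∞` as `n → ∞`. -/
theorem cusum_statistic_diverges_under_alternative
    (lam M : ℝ) (hlam : lam ∈ Set.Ioo (0 : ℝ) 1) (hM : 0 < M)
    (a b : ℕ → ℝ) (μa μb : ℝ)
    (ha : ∀ t : ℕ, a t ∈ Set.Icc 0 M) (hb : ∀ t : ℕ, b t ∈ Set.Icc 0 M)
    (hma : Tendsto (fun m : ℕ => (1 / (m : ℝ)) * ∑ t ∈ Finset.Icc 1 m, a t)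
      atTop (nhds μa))
    (hmb : Tendsto (fun m : ℕ => (1 / (m : ℝ)) * ∑ t ∈ Finset.Icc 1 m, b t)
      atTop (nhds μb))
    (x : ℕ → ℕ → ℝ)
    (hx : ∀ n t : ℕ, x n t = if t ≤ ⌊(n : ℝ) * lam⌋₊ then a t else b t)
    (D : ℕ → ℕ → ℝ)
    (hD : ∀ n k : ℕ, D n k =
      |(∑ t ∈ Finset.Icc 1 k, x n t) - (k : ℝ) / (n : ℝ) * ∑ t ∈ Finset.Icc 1 n, x n t|)
    (hCpos : 0 < |μa - μb|)
    (τ : ℕ → ℝ) (hτ : ∀ n : ℕ, 0 < τ n ∧ τ n ≤ Real.sqrt 2 * M) :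
    Tendsto (fun n : ℕ =>
        (1 / (Real.sqrt n * τ n)) * ⨆ k : Finset.Icc 1 n, D n (k : ℕ))
      atTop atTop := by
  obtain ⟨hl0, hl1⟩ := hlam
  set K : ℕ → ℕ := fun n => ⌊(n : ℝ) * lam⌋₊ with hKdef
  have hKn : Tendsto (fun n : ℕ => (K n : ℝ) / n) atTop (nhds lam) := by
    have h := (tendsto_nat_floor_mul_div_atTop (R := ℝ) hl0.le).comp
      tendsto_natCast_atTop_atTop
    refine h.congr fun n => ?_
    simp [hKdef, mul_comm]
  have hK : Tendsto K atTop atTop :=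
    tendsto_nat_floor_atTop.comp (tendsto_natCast_atTop_atTop.atTop_mul_const hl0)
  have hKle : ∀ n, K n ≤ n := fun n =>
    Nat.floor_le_of_le (mul_le_of_le_one_right n.cast_nonneg hl1.le)
  have hid : Tendsto (fun n : ℕ => (n : ℝ) / n) atTop (nhds 1) :=
    tendsto_const_nhds.congr' <| by
      filter_upwards [eventually_gt_atTop 0] with n hn
      rw [div_self]
      exact_mod_cast hn.ne'
  have hA := tendsto_partial_sum_div a μa lam K hma hK hKn
  have hB := tendsto_partial_sum_div b μb lam K hmb hK hKn
  have hBn := tendsto_partial_sum_div b μb 1 (fun n => n) hmb tendsto_id hid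
  have hDlim : Tendsto (fun n : ℕ => D n (K n) / n) atTop
      (nhds |lam * μa - lam * (lam * μa + (1 * μb - lam * μb))|) := by
    refine ((hA.sub (hKn.mul (hA.add (hBn.sub hB)))).abs).congr fun n => ?_
    have h1 : ∑ t ∈ Finset.Icc 1 (K n), x n t = ∑ t ∈ Finset.Icc 1 (K n), a t :=
      Finset.sum_congr rfl fun t ht => by
        rw [hx, if_pos (Finset.mem_Icc.1 ht).2]
    have h2 := sum_two_regime a b (K n) n (hKle n)
    simp only [hD, h1]
    simp only [hx]
    rw [h2, ← abs_of_nonneg (n.cast_nonneg : (0 : ℝ) ≤ n), ← abs_div,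
      abs_of_nonneg (n.cast_nonneg : (0 : ℝ) ≤ n)]
    congr 1
    ring
  have hpos : 0 < |lam * μa - lam * (lam * μa + (1 * μb - lam * μb))| := by
    have : lam * μa - lam * (lam * μa + (1 * μb - lam * μb))
        = (lam * (1 - lam)) * (μa - μb) := by ring
    have hll : 0 < lam * (1 - lam) := mul_pos hl0 (sub_pos.2 hl1)
    rw [this, abs_mul, abs_of_pos hll]
    exact mul_pos hll hCpos
  have hsM : 0 < Real.sqrt 2 * M := by positivity
  have hsqrt : Tendsto (fun n : ℕ => Real.sqrt n) atTop atTop :=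
    Real.tendsto_sqrt_atTop.comp tendsto_natCast_atTop_atTop
  have hmain := (hsqrt.atTop_mul_pos hpos hDlim).atTop_div_const hsM
  refine tendsto_atTop_mono' _ ?_ hmain
  filter_upwards [hK.eventually_gt_atTop 0, eventually_gt_atTop 0] with n hKpos hn
  have hn' : (0 : ℝ) < n := by exact_mod_cast hn
  have hs : 0 < Real.sqrt n := Real.sqrt_pos.2 hn'
  obtain ⟨ht0, ht1⟩ := hτ n
  have hDnn : 0 ≤ D n (K n) := by rw [hD]; exact abs_nonneg _
  have hsup : D n (K n) ≤ ⨆ k : Finset.Icc 1 n, D n (k : ℕ) :=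
    le_ciSup (f := fun k : Finset.Icc 1 n => D n (k : ℕ)) (Set.finite_range _).bddAbove
      ⟨K n, Finset.mem_Icc.2 ⟨hKpos, hKle n⟩⟩
  calc Real.sqrt n * (D n (K n) / n) / (Real.sqrt 2 * M)
      = 1 / (Real.sqrt n * (Real.sqrt 2 * M)) * D n (K n) := by
        have hsq : (n : ℝ) = Real.sqrt n * Real.sqrt n := (Real.mul_self_sqrt hn'.le).symm
        have : D n (K n) / n = D n (K n) / (Real.sqrt n * Real.sqrt n) := by rw [← hsq]
        rw [this]
        field_simp
    _ ≤ 1 / (Real.sqrt n * τ n) * D n (K n) := by gcongr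
    _ ≤ _ := by gcongr
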